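/- arXiv:1208.3229 — 6 statements merged into one kernel-verified Lean document; each statement's English description precedes it below -/
import Mathlib

section
/- Fix a prime power q. Let f_1, …, f_m and g_1, …, g_m be monic irreducible polynomials over F_q (not necessarily distinct) and λ_1, …, λ_m positive integers, such that for each i: deg f_i = deg g_i, and either f_i = g_i = x, or f_i(0) ≠ 0, g_i(0) ≠ 0 and ord f_i = ord g_i. Let A be the block-diagonal matrix with blocks the companion matrices of f_1^{λ_1}, …, f_m^{λ_m} and B the block-diagonal matrix with blocks the companion matrices of g_1^{λ_1}, …, g_m^{λ_m}. Then A and B, viewed as maps of (F_q)^n with n = Σ_i λ_i·deg f_i, are dynamically equivalent. -/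
/-!
It suffices to conjugate the blocks one at a time. A block equal to `X ^ n` on both sides needs
nothing, so let `f`, `g` be irreducible, of the same degree, with nonzero constant terms and the
same order.

The companion matrix of `f ^ n` is multiplication by `X` on `F[X] / (f ^ n)`; it is a permutation,
and `v` is fixed by its `k`-th iterate iff `f ^ n ∣ (X ^ k - 1) * v`, i.e. iff `f ^ i ∣ X ^ k - 1`
and `f ^ j ∣ v` for some `i + j = n`. Two observations compare this with the same condition for `g`.

* `f ^ i ∣ X ^ k - 1 ↔ g ^ i ∣ X ^ k - 1` (`pow_dvd_X_pow_sub_one_iff`): in characteristic `p`, write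
  `k = p ^ a * l` with `p ∤ l`, so that `X ^ k - 1` is the `p ^ a`-th power of the squarefree
  `X ^ l - 1`. Hence `f` has multiplicity `p ^ a` or `0` in it, according to whether the order of `f`
  divides `k`.
* Rereading the `f`-adic digits of `v` in base `g` is a bijection on the polynomials of degree less
  than `n * deg f = n * deg g` which turns divisibility by `f ^ j` into divisibility by `g ^ j`
  (`pow_dvd_rebase_iff`).

So `rebase` is a bijection preserving periods. It need not commute with the maps, but two finite
permutations with such a bijection between them have the same cycle type, hence are conjugate
(`dynEquiv_of_periods`).
-/

open Polynomial

/-- Two self-maps (of possibly different sets) are *dynamically equivalent* if they are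
conjugate by a bijection, i.e. their functional graphs are isomorphic. -/
def DynEquiv {X Y : Type*} (f : X → X) (g : Y → Y) : Prop :=
  ∃ σ : X ≃ Y, ∀ x, σ (f x) = g (σ x)

/-- The order of a polynomial `f` (with `f(0) ≠ 0`): the least positive `e` with
`f ∣ X^e - 1`. -/
noncomputable def polyOrder {F : Type*} [Field F] (f : F[X]) : ℕ :=
  sInf {e : ℕ | 0 < e ∧ f ∣ X ^ e - 1}

/-- The companion matrix of a monic polynomial `p` (of degree `p.natDegree`): ones on
the subdiagonal and the negatives of the coefficients of `p` in the last column. -/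
def companion {F : Type*} [Field F] (p : F[X]) :
    Matrix (Fin p.natDegree) (Fin p.natDegree) F :=
  Matrix.of fun i j =>
    if (j : ℕ) + 1 = p.natDegree then -p.coeff i
    else if (i : ℕ) = (j : ℕ) + 1 then 1 else 0

/-! ### Permutations with the same periods -/

/-- Counting the points on cycles of length `n`: each such cycle contributes `n` of them. -/
lemma card_filter_cycleOf_card {α : Type*} [Fintype α] [DecidableEq α] (σ : Equiv.Perm α) (n : ℕ) :
    (σ.support.filter (fun x => (σ.cycleOf x).support.card = n)).card
      = σ.cycleType.count n * n := by
  rw [Equiv.Perm.cycleType_def, Multiset.count_map]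
  have hmaps : Set.MapsTo σ.cycleOf
      (σ.support.filter (fun x => (σ.cycleOf x).support.card = n) : Finset α)
      (σ.cycleFactorsFinset.filter (fun c => n = (Finset.card ∘ Equiv.Perm.support) c) :
        Finset (Equiv.Perm α)) := by
    intro x hx
    simp only [Finset.coe_filter, Set.mem_ofPred_eq] at hx ⊢
    exact ⟨Equiv.Perm.cycleOf_mem_cycleFactorsFinset_iff.2 hx.1, hx.2.symm⟩
  rw [Finset.card_eq_sum_card_fiberwise hmaps, Finset.sum_const_nat (m := n)]
  · rfl
  · intro c hc
    rw [Finset.mem_filter] at hc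
    obtain ⟨hc, hn⟩ := hc
    simp only [Function.comp_apply] at hn
    rw [hn]
    congr 1
    ext x
    simp only [Finset.mem_filter]
    constructor
    · rintro ⟨⟨hx, -⟩, rfl⟩
      rw [Equiv.Perm.mem_support_cycleOf_iff]
      exact ⟨Equiv.Perm.SameCycle.refl _ _, hx⟩
    · intro hx
      have h := Equiv.Perm.cycle_is_cycleOf hx hc
      exact ⟨⟨Equiv.Perm.mem_cycleFactorsFinset_support_le hc hx, by rw [← h]⟩, h.symm⟩

lemma isConj_of_pow_fixed_iff {α : Type*} [Finite α] (σ τ : Equiv.Perm α)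
    (h : ∀ (k : ℕ) (x : α), (σ ^ k) x = x ↔ (τ ^ k) x = x) : IsConj σ τ := by
  classical
  have := Fintype.ofFinite α
  rw [Equiv.Perm.isConj_iff_cycleType_eq]
  have hsupp : σ.support = τ.support := by
    ext x
    simpa using not_congr (h 1 x)
  have hcard : ∀ x ∈ σ.support, (σ.cycleOf x).support.card = (τ.cycleOf x).support.card := by
    have key : ∀ (ρ : Equiv.Perm α) (x), x ∈ ρ.support → ∀ k : ℕ,
        ((ρ ^ k) x = x ↔ (ρ.cycleOf x).support.card ∣ k) := by
      intro ρ x hx k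
      exact (Equiv.Perm.isCycleOn_support_cycleOf ρ x).pow_apply_eq
        (Equiv.Perm.mem_support_cycleOf_iff.2 ⟨Equiv.Perm.SameCycle.refl _ _, hx⟩)
    intro x hx
    have hx' : x ∈ τ.support := hsupp ▸ hx
    apply Nat.dvd_antisymm
    · rw [← key σ x hx, h, key τ x hx']
    · rw [← key τ x hx', ← h, key σ x hx]
  ext n
  rcases Nat.eq_zero_or_pos n with rfl | hn
  · have h0 : ∀ ρ : Equiv.Perm α, ρ.cycleType.count 0 = 0 := fun ρ =>
      Multiset.count_eq_zero_of_notMem fun h0 => by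
        have := Equiv.Perm.two_le_of_mem_cycleType h0
        omega
    rw [h0, h0]
  · apply Nat.eq_of_mul_eq_mul_right hn
    rw [← card_filter_cycleOf_card, ← card_filter_cycleOf_card, ← hsupp]
    congr 1
    apply Finset.filter_congr
    intro x hx
    rw [hcard x hx]

/-- A period-preserving bijection between two finite permutations yields a conjugacy, although the
bijection itself need not be one. -/
lemma dynEquiv_of_periods {α β : Type*} [Finite α] [Finite β] (s : α → α) (t : β → β)
    (hs : Function.Injective s) (ht : Function.Injective t) (e : α ≃ β)
    (h : ∀ (k : ℕ) (x : α), s^[k] x = x ↔ t^[k] (e x) = e x) : DynEquiv s t := by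
  let σ : Equiv.Perm α := Equiv.ofBijective s (Finite.injective_iff_bijective.1 hs)
  let τ : Equiv.Perm β := Equiv.ofBijective t (Finite.injective_iff_bijective.1 ht)
  have hσ : ∀ (k : ℕ) x, (σ ^ k) x = s^[k] x := fun k x => by
    rw [← Equiv.Perm.iterate_eq_pow]; rfl
  have hτ : ∀ (k : ℕ) x, ((e.symm.permCongr τ) ^ k) x = e.symm (t^[k] (e x)) := fun k x => by
    rw [← Equiv.Perm.iterate_eq_pow]
    have hc : Function.Semiconj e.symm t (e.symm.permCongr τ) := fun y => by
      simp [Equiv.permCongr_apply, τ]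
    have := (hc.iterate_right k) (e x)
    rw [this, Equiv.symm_apply_apply]
  have hconj : IsConj σ (e.symm.permCongr τ) := by
    apply isConj_of_pow_fixed_iff
    intro k x
    rw [hσ, hτ, h, Equiv.symm_apply_eq]
  obtain ⟨c, hc⟩ := isConj_iff.1 hconj
  refine ⟨c.trans e, fun x => ?_⟩
  have h1 := congrArg (fun ρ : Equiv.Perm α => e (ρ (c x))) hc
  simpa [Equiv.permCongr_apply, σ, τ] using h1

/-! ### Divisibility of `X ^ k - 1` by powers of an irreducible polynomial -/

lemma polyOrder_eq_orderOf {F : Type*} [Field F] (f : F[X]) :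
    polyOrder f = orderOf (AdjoinRoot.root f) := by
  have key : ∀ k : ℕ, f ∣ X ^ k - 1 ↔ (AdjoinRoot.root f) ^ k = 1 := fun k => by
    rw [← AdjoinRoot.mk_eq_zero, map_sub, map_pow, AdjoinRoot.mk_X, map_one, sub_eq_zero]
  unfold polyOrder
  simp_rw [key]
  by_cases h0 : orderOf (AdjoinRoot.root f) = 0
  · rw [h0]
    rw [orderOf_eq_zero_iff'] at h0
    rw [Nat.sInf_eq_zero]
    right
    ext k
    simpa using h0 k
  · refine IsLeast.csInf_eq ⟨⟨Nat.pos_of_ne_zero h0, pow_orderOf_eq_one _⟩, ?_⟩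
    rintro k ⟨hk, hk1⟩
    exact Nat.le_of_dvd hk (orderOf_dvd_of_pow_eq_one hk1)

lemma dvd_X_pow_sub_one_iff {F : Type*} [Field F] (f : F[X]) (k : ℕ) :
    f ∣ X ^ k - 1 ↔ polyOrder f ∣ k := by
  rw [polyOrder_eq_orderOf, orderOf_dvd_iff_pow_eq_one, ← AdjoinRoot.mk_eq_zero, map_sub, map_pow,
    AdjoinRoot.mk_X, map_one, sub_eq_zero]

lemma pow_dvd_squarefree_pow_iff {R : Type*} [CommRing R] [IsDomain R] {f s : R} (hf : Prime f)
    (hs : Squarefree s) (j N : ℕ) : f ^ j ∣ s ^ N ↔ j = 0 ∨ (f ∣ s ^ N ∧ j ≤ N) := by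
  constructor
  · intro h
    rcases Nat.eq_zero_or_pos j with hj | hj
    · exact Or.inl hj
    refine Or.inr ⟨(dvd_pow_self f hj.ne').trans h, ?_⟩
    by_contra! hlt
    obtain ⟨t, rfl⟩ := hf.dvd_of_dvd_pow ((dvd_pow_self f hj.ne').trans h)
    have h1 : f ^ N * f ∣ f ^ N * t ^ N := by
      rw [← pow_succ, ← mul_pow]
      exact (pow_dvd_pow f hlt).trans h
    have h2 : f ∣ t :=
      hf.dvd_of_dvd_pow ((mul_dvd_mul_iff_left (pow_ne_zero N hf.ne_zero)).1 h1)
    exact hf.not_isUnit (hs f (mul_dvd_mul_left f h2))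
  · rintro (rfl | ⟨h, hj⟩)
    · simp
    · exact (pow_dvd_pow f hj).trans (pow_dvd_pow_of_dvd (hf.dvd_of_dvd_pow h) N)

lemma pow_dvd_X_pow_sub_one_iff {F : Type*} [Field F] {f g : F[X]}
    (hf : Prime f) (hg : Prime g) (h : polyOrder f = polyOrder g) (j k : ℕ) :
    f ^ j ∣ X ^ k - 1 ↔ g ^ j ∣ X ^ k - 1 := by
  rcases Nat.eq_zero_or_pos k with rfl | hk
  · simp
  obtain ⟨N, s, hs, hN⟩ : ∃ (N : ℕ) (s : F[X]), Squarefree s ∧ X ^ k - 1 = s ^ N := by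
    obtain ⟨p, hp⟩ := ExpChar.exists F
    rcases hp with _ | hprime
    · refine ⟨1, X ^ k - 1, (X_pow_sub_one_separable_iff.2 ?_).squarefree, (pow_one _).symm⟩
      exact_mod_cast hk.ne'
    · have := Fact.mk hprime
      obtain ⟨a, l, hl, rfl⟩ := Nat.exists_eq_pow_mul_and_not_dvd hk.ne' p hprime.ne_one
      refine ⟨p ^ a, X ^ l - 1, (X_pow_sub_one_separable_iff.2 ?_).squarefree, ?_⟩
      · rwa [Ne, CharP.cast_eq_zero_iff F p]
      · rw [sub_pow_char_pow, one_pow, ← pow_mul, mul_comm]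
  have h1 : f ∣ s ^ N ↔ g ∣ s ^ N := by
    rw [← hN, dvd_X_pow_sub_one_iff, dvd_X_pow_sub_one_iff, h]
  rw [hN, pow_dvd_squarefree_pow_iff hf hs, pow_dvd_squarefree_pow_iff hg hs, h1]

lemma prime_pow_dvd_mul_iff {R : Type*} [CommRing R] [IsDomain R] [DecompositionMonoid R] {f : R}
    (hf : Prime f) (n : ℕ) (a b : R) :
    f ^ n ∣ a * b ↔ ∃ i j, i + j = n ∧ f ^ i ∣ a ∧ f ^ j ∣ b := by
  constructor
  · intro h
    obtain ⟨u, v, hu, hv, huv⟩ := exists_dvd_and_dvd_of_dvd_mul h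
    obtain ⟨i, hi, hui⟩ := (dvd_prime_pow hf n).1 ⟨v, huv⟩
    refine ⟨i, n - i, by omega, hui.symm.dvd.trans hu, ?_⟩
    have h1 : f ^ i * f ^ (n - i) ∣ f ^ i * v := by
      rw [← pow_add, Nat.add_sub_cancel' hi, huv]
      exact mul_dvd_mul_right hui.dvd v
    exact ((mul_dvd_mul_iff_left (pow_ne_zero i hf.ne_zero)).1 h1).trans hv
  · rintro ⟨i, j, rfl, h1, h2⟩
    rw [pow_add]
    exact mul_dvd_mul h1 h2

/-! ### Exchanging the base of an adic expansion -/

/-- Expand `v` in base `f` up to `n` digits, and reread the digits (and the remaining quotient) in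
base `g`. -/
noncomputable def rebase {F : Type*} [Field F] (f g : F[X]) : ℕ → F[X] → F[X]
  | 0, v => v
  | n + 1, v => g * rebase f g n (v /ₘ f) + v %ₘ f

section rebase

variable {F : Type*} [Field F] {f g : F[X]}

lemma divMod_rebase_succ (hf : f.Monic) (hg : g.Monic) (hd : f.natDegree = g.natDegree) (n : ℕ)
    (v : F[X]) : rebase f g (n + 1) v /ₘ g = rebase f g n (v /ₘ f) ∧
      rebase f g (n + 1) v %ₘ g = v %ₘ f := by
  refine div_modByMonic_unique _ _ hg ⟨add_comm _ _, ?_⟩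
  rw [degree_eq_natDegree hg.ne_zero, ← hd, ← degree_eq_natDegree hf.ne_zero]
  exact degree_modByMonic_lt v hf

lemma rebase_rebase (hf : f.Monic) (hg : g.Monic) (hd : f.natDegree = g.natDegree) (n : ℕ)
    (v : F[X]) : rebase g f n (rebase f g n v) = v := by
  induction n generalizing v with
  | zero => rfl
  | succ n ih =>
    obtain ⟨h1, h2⟩ := divMod_rebase_succ hf hg hd n v
    rw [rebase, h1, h2, ih, add_comm, modByMonic_add_div]

lemma rebase_zero (n : ℕ) : rebase f g n 0 = 0 := by
  induction n with
  | zero => rfl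
  | succ n ih => simp [rebase, ih]

lemma degree_rebase_lt (hf : f.Monic) (hg : g.Monic) (hd : f.natDegree = g.natDegree) (n N : ℕ)
    (v : F[X]) (hv : v.degree < N) : (rebase f g n v).degree < N := by
  induction n generalizing v N with
  | zero => exact hv
  | succ n ih =>
    have hd' : f.degree = g.degree := by
      rw [degree_eq_natDegree hf.ne_zero, degree_eq_natDegree hg.ne_zero, hd]
    rw [rebase]
    refine (degree_add_le _ _).trans_lt (max_lt ?_ ((degree_modByMonic_le_left).trans_lt hv))
    by_cases hlt : v.degree < f.degree
    · rw [(divByMonic_eq_zero_iff hf).2 hlt, rebase_zero, mul_zero, degree_zero]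
      exact WithBot.bot_lt_coe N
    · have hadd := degree_add_divByMonic hf (not_lt.1 hlt)
      have hq : v /ₘ f ≠ 0 := fun h => hlt ((divByMonic_eq_zero_iff hf).1 h)
      rw [← hadd, degree_eq_natDegree hf.ne_zero, degree_eq_natDegree hq] at hv
      have hv' : f.natDegree + (v /ₘ f).natDegree < N := by exact_mod_cast hv
      have h1 := ih (N - f.natDegree) (v /ₘ f) (by
        rw [degree_eq_natDegree hq]
        exact_mod_cast (by omega : (v /ₘ f).natDegree < N - f.natDegree))
      rw [degree_mul]
      by_cases hr : rebase f g n (v /ₘ f) = 0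
      · rw [hr, degree_zero, WithBot.add_bot]
        exact WithBot.bot_lt_coe N
      · rw [degree_eq_natDegree hr] at h1 ⊢
        rw [degree_eq_natDegree hg.ne_zero, ← hd]
        have h1' : (rebase f g n (v /ₘ f)).natDegree < N - f.natDegree := by exact_mod_cast h1
        exact_mod_cast (by omega :
          f.natDegree + (rebase f g n (v /ₘ f)).natDegree < N)

lemma pow_dvd_rebase (hf : f.Monic) {i n : ℕ} (hin : i ≤ n) {v : F[X]} (h : f ^ i ∣ v) :
    g ^ i ∣ rebase f g n v := by
  induction i generalizing n v with
  | zero => simp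
  | succ i ih =>
    obtain ⟨n, rfl⟩ : ∃ n', n = n' + 1 := ⟨n - 1, by omega⟩
    obtain ⟨u, rfl⟩ := h
    obtain ⟨h1, h2⟩ := div_modByMonic_unique (f := f ^ (i + 1) * u) (f ^ i * u) 0 hf
      ⟨by ring, by simpa [bot_lt_iff_ne_bot] using hf.ne_zero⟩
    rw [rebase, h1, h2, add_zero, pow_succ']
    exact mul_dvd_mul_left g (ih (by omega) (dvd_mul_right _ _))

lemma pow_dvd_rebase_iff (hf : f.Monic) (hg : g.Monic) (hd : f.natDegree = g.natDegree) {i n : ℕ}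
    (hin : i ≤ n) (v : F[X]) : g ^ i ∣ rebase f g n v ↔ f ^ i ∣ v := by
  refine ⟨fun h => ?_, pow_dvd_rebase hf hin⟩
  have := pow_dvd_rebase (g := f) hg hin h
  rwa [rebase_rebase hf hg hd] at this

end rebase

/-! ### The companion matrix as multiplication by `X` -/

/-- The polynomial `∑ v i * X ^ i` with coefficient vector `v`. -/
noncomputable def vecPoly {F : Type*} [Field F] {n : ℕ} (v : Fin n → F) : F[X] :=
  ((degreeLTEquiv F n).symm v : F[X])

section vecPoly

variable {F : Type*} [Field F] {n : ℕ}

lemma vecPoly_degree_lt (v : Fin n → F) : (vecPoly v).degree < n :=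
  mem_degreeLT.1 ((degreeLTEquiv F n).symm v).2

lemma vecPoly_coeff (v : Fin n → F) (i : Fin n) : (vecPoly v).coeff i = v i :=
  congrFun ((degreeLTEquiv F n).apply_symm_apply v) i

lemma vecPoly_of_coeff {p : F[X]} (hp : p.degree < n) :
    vecPoly (fun i : Fin n => p.coeff i) = p :=
  congrArg Subtype.val ((degreeLTEquiv F n).symm_apply_apply ⟨p, mem_degreeLT.2 hp⟩)

lemma vecPoly_sub (v w : Fin n → F) : vecPoly (v - w) = vecPoly v - vecPoly w := by
  simp [vecPoly]

lemma vecPoly_injective : Function.Injective (vecPoly : (Fin n → F) → F[X]) := fun v w h => by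
  ext i
  rw [← vecPoly_coeff v, h, vecPoly_coeff]

/-- `vecPoly v` is the reduced representative of its class modulo a polynomial of degree `n`. -/
lemma dvd_vecPoly_sub_iff {p : F[X]} (v w : Fin p.natDegree → F) (hp : p ≠ 0) :
    p ∣ vecPoly v - vecPoly w ↔ v = w := by
  constructor
  · intro h
    rw [← vecPoly_sub] at h
    have h0 := eq_zero_of_dvd_of_degree_lt h
      ((vecPoly_degree_lt _).trans_eq (degree_eq_natDegree hp).symm)
    rw [vecPoly_sub, sub_eq_zero] at h0
    exact vecPoly_injective h0
  · rintro rfl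
    simp

lemma dvd_vecPoly_companion {p : F[X]} (hp : p.Monic) (v : Fin p.natDegree → F) :
    p ∣ vecPoly ((companion p).mulVec v) - X * vecPoly v := by
  rcases Nat.eq_zero_or_pos p.natDegree with h0 | hpos
  · have h1 : IsUnit p := by
      rw [hp.natDegree_eq_zero.1 h0]
      exact isUnit_one
    exact h1.dvd
  let l : Fin p.natDegree := ⟨p.natDegree - 1, by omega⟩
  -- Wrapping around the top coefficient `v l` subtracts `v l * p`.
  suffices h : vecPoly ((companion p).mulVec v) = X * vecPoly v - C (v l) * p by
    rw [h]
    exact ⟨-C (v l), by ring⟩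
  have hbig : ∀ k, p.natDegree ≤ k → ∀ w : Fin p.natDegree → F, (vecPoly w).coeff k = 0 :=
    fun k hk w => coeff_eq_zero_of_degree_lt
      ((vecPoly_degree_lt w).trans_le (by exact_mod_cast hk))
  ext k
  rw [coeff_sub, coeff_C_mul]
  by_cases hk : k < p.natDegree
  · rw [vecPoly_coeff _ ⟨k, hk⟩]
    have hterm : ∀ j : Fin p.natDegree, companion p ⟨k, hk⟩ j * v j
        = (if j = l then -p.coeff k * v l else 0) + (if (j : ℕ) + 1 = k then v j else 0) := by
      intro j
      have hjl : j = l ↔ (j : ℕ) + 1 = p.natDegree := by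
        rw [Fin.ext_iff]
        simp only [l]
        omega
      simp only [companion, Matrix.of_apply, hjl]
      by_cases h1 : (j : ℕ) + 1 = p.natDegree
      · have h2 : (j : ℕ) + 1 ≠ k := by omega
        rw [hjl.2 h1] at h2 ⊢
        have h1' : (l : ℕ) + 1 = p.natDegree := by rw [← hjl.2 h1]; exact h1
        simp [h1']
        intro h3
        omega
      · simp [h1, eq_comm]
    simp only [Matrix.mulVec, dotProduct]
    rw [Finset.sum_congr rfl fun j _ => hterm j, Finset.sum_add_distrib, Finset.sum_ite_eq']
    simp only [Finset.mem_univ, if_true]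
    rcases k with _ | k
    · simp
      ring
    · rw [coeff_X_mul, vecPoly_coeff v ⟨k, by omega⟩,
        Finset.sum_eq_single (⟨k, by omega⟩ : Fin p.natDegree)]
      · simp
        ring
      · intro j _ hj
        rw [if_neg]
        intro h
        exact hj (Fin.ext (by simpa using h))
      · simp
  · rw [hbig k (by omega)]
    obtain ⟨k, rfl⟩ : ∃ k', k = k' + 1 := ⟨k - 1, by omega⟩
    rw [coeff_X_mul]
    rcases Nat.lt_or_ge k p.natDegree with hlt | hge
    · have hkd : k + 1 = p.natDegree := by omega
      have hkl : (vecPoly v).coeff k = v l := by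
        rw [← vecPoly_coeff v l]
        congr 1
        simp only [l]
        omega
      rw [hkl, hkd, hp.coeff_natDegree]
      ring
    · rw [hbig k hge, coeff_eq_zero_of_natDegree_lt (by omega : p.natDegree < k + 1)]
      ring

lemma dvd_vecPoly_companion_iterate {p : F[X]} (hp : p.Monic) (k : ℕ) (v : Fin p.natDegree → F) :
    p ∣ vecPoly ((companion p).mulVec^[k] v) - X ^ k * vecPoly v := by
  induction k with
  | zero => simp
  | succ k ih =>
    rw [Function.iterate_succ_apply']
    have h := dvd_add (dvd_vecPoly_companion hp ((companion p).mulVec^[k] v))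
      (dvd_mul_of_dvd_right ih X)
    convert h using 1
    ring

lemma companion_iterate_fixed_iff {p : F[X]} (hp : p.Monic) (k : ℕ) (v : Fin p.natDegree → F) :
    (companion p).mulVec^[k] v = v ↔ p ∣ (X ^ k - 1) * vecPoly v := by
  rw [← dvd_vecPoly_sub_iff _ _ hp.ne_zero]
  have h := dvd_vecPoly_companion_iterate hp k v
  rw [← dvd_add_right h (c := (X ^ k - 1) * vecPoly v)]
  ring_nf

lemma companion_mulVec_injective {p : F[X]} (hp : p.Monic) (hX : IsCoprime p X) :
    Function.Injective (companion p).mulVec := by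
  intro v w h
  rw [← dvd_vecPoly_sub_iff _ _ hp.ne_zero]
  apply hX.dvd_of_dvd_mul_left
  have h1 := dvd_sub (dvd_vecPoly_companion hp w) (dvd_vecPoly_companion hp v)
  simp only [h] at h1
  convert h1 using 1
  ring

end vecPoly

/-! ### Assembling the blocks -/

/-- Rebasing preserves the `f`-adic, respectively `g`-adic, valuation up to `n`, and the period of
a vector depends only on this valuation and on those of the polynomials `X ^ k - 1`. -/
lemma dynEquiv_companion_pow {F : Type*} [Field F] [Finite F] {f g : F[X]} (hfm : f.Monic)
    (hgm : g.Monic) (hfi : Irreducible f) (hgi : Irreducible g) (hd : f.natDegree = g.natDegree)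
    (hf0 : f.coeff 0 ≠ 0) (hg0 : g.coeff 0 ≠ 0) (ho : polyOrder f = polyOrder g) (n : ℕ) :
    DynEquiv (companion (f ^ n)).mulVec (companion (g ^ n)).mulVec := by
  have hcop : ∀ {h : F[X]}, Irreducible h → h.coeff 0 ≠ 0 → IsCoprime (h ^ n) X := by
    intro h _ h0
    refine IsCoprime.pow_left (IsCoprime.symm ?_)
    exact (irreducible_X.coprime_iff_not_dvd).2 fun hx => h0 (X_dvd_iff.1 hx)
  have hdn : (f ^ n).natDegree = (g ^ n).natDegree := by
    rw [natDegree_pow, natDegree_pow, hd]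
  have hdeg1 : ∀ v : Fin (f ^ n).natDegree → F,
      (rebase f g n (vecPoly v)).degree < (g ^ n).natDegree := fun v =>
    degree_rebase_lt hfm hgm hd _ _ _ (by rw [← hdn]; exact vecPoly_degree_lt v)
  have hdeg2 : ∀ v : Fin (g ^ n).natDegree → F,
      (rebase g f n (vecPoly v)).degree < (f ^ n).natDegree := fun v =>
    degree_rebase_lt hgm hfm hd.symm _ _ _ (by rw [hdn]; exact vecPoly_degree_lt v)
  let e : (Fin (f ^ n).natDegree → F) ≃ (Fin (g ^ n).natDegree → F) :=
    { toFun := fun v i => (rebase f g n (vecPoly v)).coeff i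
      invFun := fun v i => (rebase g f n (vecPoly v)).coeff i
      left_inv := fun v => by
        apply vecPoly_injective
        rw [vecPoly_of_coeff (hdeg2 _), vecPoly_of_coeff (hdeg1 _), rebase_rebase hfm hgm hd]
      right_inv := fun v => by
        apply vecPoly_injective
        rw [vecPoly_of_coeff (hdeg1 _), vecPoly_of_coeff (hdeg2 _), rebase_rebase hgm hfm hd.symm] }
  have he : ∀ v, vecPoly (e v) = rebase f g n (vecPoly v) := fun v => vecPoly_of_coeff (hdeg1 v)
  refine dynEquiv_of_periods _ _ (companion_mulVec_injective (hfm.pow n) (hcop hfi hf0))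
    (companion_mulVec_injective (hgm.pow n) (hcop hgi hg0)) e fun k v => ?_
  rw [companion_iterate_fixed_iff (hfm.pow n), companion_iterate_fixed_iff (hgm.pow n), he,
    prime_pow_dvd_mul_iff hfi.prime, prime_pow_dvd_mul_iff hgi.prime]
  refine exists_congr fun i => exists_congr fun j => and_congr_right fun hij => ?_
  rw [pow_dvd_X_pow_sub_one_iff hfi.prime hgi.prime ho,
    pow_dvd_rebase_iff hfm hgm hd (by omega : j ≤ n)]

lemma blockDiagonal'_mulVec_apply {F ι : Type*} [Field F] [Fintype ι] [DecidableEq ι] {c : ι → Type*}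
    [∀ i, Fintype (c i)] (M : ∀ i, Matrix (c i) (c i) F) (v : (Σ i, c i) → F) (i : ι) (x : c i) :
    (Matrix.blockDiagonal' M).mulVec v ⟨i, x⟩ = (M i).mulVec (fun y => v ⟨i, y⟩) x := by
  simp only [Matrix.mulVec, dotProduct, Fintype.sum_sigma]
  rw [Finset.sum_eq_single i]
  · simp [Matrix.blockDiagonal'_apply_eq]
  · intro j _ hj
    exact Finset.sum_eq_zero fun y _ => by
      rw [Matrix.blockDiagonal'_apply_ne _ _ _ hj.symm, zero_mul]
  · simp

lemma dynEquiv_blockDiagonal' {F ι : Type*} [Field F] [Fintype ι] [DecidableEq ι] {a b : ι → Type*}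
    [∀ i, Fintype (a i)] [∀ i, Fintype (b i)] (A : ∀ i, Matrix (a i) (a i) F)
    (B : ∀ i, Matrix (b i) (b i) F) (h : ∀ i, DynEquiv (A i).mulVec (B i).mulVec) :
    DynEquiv (Matrix.blockDiagonal' A).mulVec (Matrix.blockDiagonal' B).mulVec := by
  choose σ hσ using h
  refine ⟨(Equiv.piCurry fun i (_ : a i) => F).trans
    ((Equiv.piCongrRight σ).trans (Equiv.piCurry fun i (_ : b i) => F).symm), fun v => ?_⟩
  funext ⟨i, x⟩
  rw [blockDiagonal'_mulVec_apply]
  have h1 : (fun y => (Matrix.blockDiagonal' A).mulVec v ⟨i, y⟩)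
      = (A i).mulVec (fun y => v ⟨i, y⟩) :=
    funext fun y => blockDiagonal'_mulVec_apply A v i y
  change σ i (fun y => (Matrix.blockDiagonal' A).mulVec v ⟨i, y⟩) x = _
  rw [h1, hσ]
  rfl

/-- Block-diagonal matrices built from companion matrices of `f i ^ lam i` and
`g i ^ lam i`, where for each `i` the monic irreducibles `f i`, `g i` have the same
degree and either both equal `X` or both have nonzero constant term and the same
order, are dynamically equivalent as maps of `(F_q)^n`, `n = ∑ i, lam i * deg (f i)`. -/
theorem stmt11 (F : Type*) [Field F] [Fintype F]
    (m : ℕ) (f g : Fin m → F[X]) (lam : Fin m → ℕ) (hlam : ∀ i, 0 < lam i)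
    (hfm : ∀ i, (f i).Monic) (hgm : ∀ i, (g i).Monic)
    (hfi : ∀ i, Irreducible (f i)) (hgi : ∀ i, Irreducible (g i))
    (hdeg : ∀ i, (f i).natDegree = (g i).natDegree)
    (hcond : ∀ i, (f i = X ∧ g i = X) ∨
      ((f i).coeff 0 ≠ 0 ∧ (g i).coeff 0 ≠ 0 ∧ polyOrder (f i) = polyOrder (g i))) :
    DynEquiv
      ((Matrix.blockDiagonal' (fun i : Fin m => companion (f i ^ lam i))).mulVec)
      ((Matrix.blockDiagonal' (fun i : Fin m => companion (g i ^ lam i))).mulVec) := by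
  classical
  refine dynEquiv_blockDiagonal' _ _ fun i => ?_
  rcases hcond i with ⟨h1, h2⟩ | ⟨h1, h2, h3⟩
  · rw [h1, h2]
    exact ⟨Equiv.refl _, fun _ => rfl⟩
  · exact dynEquiv_companion_pow (hfm i) (hgm i) (hfi i) (hgi i) (hdeg i) h1 h2 h3 (lam i)
end

section
/- Fix a prime power q. There exists a constant C > 0 such that for every integer n ≥ 2, every polynomial of degree n over F_q has at most C·n / log n distinct monic irreducible factors. In other words, if i_q(n) denotes the maximum over all polynomials f ∈ F_q[x] of degree n of the number of distinct monic irreducible factors of f, then i_q(n) = O(n / log n). -/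
open Polynomial

/-!
The degrees of the distinct monic irreducible factors of `f` add up to at most `n = deg f`, since
their product divides `f` (`sum_natDegree_le`). Fix a threshold `k ≥ 1`. At most `q ^ k` factors
have degree less than `k`, simply because there are only `q ^ k` polynomials of degree less than `k`
(`card_natDegree_lt_le`), and at most `n / k` factors have degree at least `k`. Taking
`k = ⌊log n / (2 log q)⌋ + 1` makes the first contribution at most `q √n`, and the second at most
`2 log q · n / log n`; as `log n ≤ 2 √n`, both are `O(n / log n)`.
-/

theorem card_natDegree_lt_le {F : Type*} [Field F] [Fintype F] (S : Finset F[X]) (k : ℕ)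
    (hS : ∀ p ∈ S, p.natDegree < k) : S.card ≤ Fintype.card F ^ k := by
  classical
  have h : S.card ≤ (Finset.univ : Finset (Fin k → F)).card := by
    apply Finset.card_le_card_of_injOn (fun p (i : Fin k) => p.coeff i) (by simp)
    intro p hp r hr h
    ext i
    by_cases hi : i < k
    · exact congrFun h ⟨i, hi⟩
    · rw [coeff_eq_zero_of_natDegree_lt ((hS p hp).trans_le (not_lt.mp hi)),
        coeff_eq_zero_of_natDegree_lt ((hS r hr).trans_le (not_lt.mp hi))]
  simpa using h

theorem sum_natDegree_le {F : Type*} [Field F] {f : F[X]} (hf : f ≠ 0) (S : Finset F[X])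
    (hS : ∀ p ∈ S, p.Monic ∧ Irreducible p ∧ p ∣ f) :
    ∑ p ∈ S, p.natDegree ≤ f.natDegree := by
  rw [← natDegree_prod_of_monic S (fun p => p) (fun p hp => (hS p hp).1)]
  refine natDegree_le_of_dvd (Finset.prod_dvd_of_coprime ?_ fun p hp => (hS p hp).2.2) hf
  intro p hp r hr hpr
  refine (hS p hp).2.1.coprime_iff_not_dvd.2 fun hd => hpr ?_
  exact eq_of_monic_of_associated (hS p hp).1 (hS r hr).1
    ((hS p hp).2.1.associated_of_dvd (hS r hr).2.1 hd)

/-- Splitting the factors at degree `k` bounds their number by `q ^ k + n / k`. -/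
theorem card_factors_le {F : Type*} [Field F] [Fintype F] {f : F[X]} (hf : f ≠ 0)
    (S : Finset F[X]) (hS : ∀ p ∈ S, p.Monic ∧ Irreducible p ∧ p ∣ f) {k : ℕ} (hk : 0 < k) :
    (S.card : ℝ) ≤ (Fintype.card F : ℝ) ^ k + f.natDegree / k := by
  classical
  have h1 := card_natDegree_lt_le (S.filter fun p => p.natDegree < k) k (by simp)
  have h2 : (S.filter fun p => ¬ p.natDegree < k).card * k ≤ f.natDegree := by
    refine le_trans ?_ (sum_natDegree_le hf (S.filter fun p => ¬ p.natDegree < k)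
      fun p hp => hS p (Finset.mem_filter.mp hp).1)
    rw [← smul_eq_mul]
    exact Finset.card_nsmul_le_sum _ _ _ fun p hp => not_lt.mp (Finset.mem_filter.mp hp).2
  rw [← Finset.card_filter_add_card_filter_not (s := S) (fun p => p.natDegree < k)]
  push_cast
  refine add_le_add (by exact_mod_cast h1) ?_
  rw [le_div_iff₀ (by exact_mod_cast hk)]
  exact_mod_cast h2

/-- Every polynomial of degree `n ≥ 2` over `F_q` has `O(n / log n)` distinct monic
irreducible factors. -/
theorem stmt12 (F : Type*) [Field F] [Fintype F] :
    ∃ C : ℝ, 0 < C ∧ ∀ n : ℕ, 2 ≤ n → ∀ f : F[X], f.natDegree = n →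
      (Nat.card {p : F[X] // p.Monic ∧ Irreducible p ∧ p ∣ f} : ℝ) ≤
        C * n / Real.log n := by
  classical
  set q := Fintype.card F with hq
  have hq1 : 1 < q := Fintype.one_lt_card
  have hqR : (1 : ℝ) < q := by exact_mod_cast hq1
  have hlq : 0 < Real.log q := Real.log_pos hqR
  refine ⟨2 * q + 2 * Real.log q, by positivity, fun n hn f hfn => ?_⟩
  have hf : f ≠ 0 := by
    rintro rfl
    simp at hfn
    omega
  have hfin : {p : F[X] | p.Monic ∧ Irreducible p ∧ p ∣ f}.Finite := by
    have : Finite {p : F[X] | p.Monic ∧ p ∣ f} :=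
      @Finite.of_fintype _ (fintypeSubtypeMonicDvd f hf)
    refine (Set.toFinite {p : F[X] | p.Monic ∧ p ∣ f}).subset fun p hp => ⟨hp.1, hp.2.2⟩
  have hcard : Nat.card {p : F[X] // p.Monic ∧ Irreducible p ∧ p ∣ f} = hfin.toFinset.card :=
    Nat.card_eq_card_finite_toFinset hfin
  have hnR : (2 : ℝ) ≤ n := by exact_mod_cast hn
  have hln : 0 < Real.log n := Real.log_pos (by linarith)
  set m := Nat.log (q ^ 2) n with hm
  have hq2 : 1 < q ^ 2 := Nat.one_lt_pow two_ne_zero hq1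
  have hlow : (q : ℝ) ^ m ≤ √n := by
    apply Real.le_sqrt_of_sq_le
    rw [← pow_mul, mul_comm, pow_mul]
    exact_mod_cast Nat.pow_log_le_self (q ^ 2) (by omega)
  have hup : Real.log n ≤ 2 * (m + 1 : ℕ) * Real.log q := by
    have h : (n : ℝ) ≤ ((q : ℝ) ^ 2) ^ (m + 1) := by
      exact_mod_cast (Nat.lt_pow_succ_log_self hq2 n).le
    have h' := Real.log_le_log (by linarith) h
    rw [Real.log_pow, Real.log_pow] at h'
    push_cast at h' ⊢
    linarith
  have hmain := card_factors_le hf hfin.toFinset (by simp) (Nat.succ_pos m)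
  rw [hcard]
  refine hmain.trans ?_
  rw [hfn, add_mul, add_div]
  refine add_le_add ?_ ?_
  · have hs : Real.log n ≤ 2 * √n := by
      have h := Real.log_le_self (Real.sqrt_nonneg (n : ℝ))
      rw [Real.log_sqrt (by linarith)] at h
      linarith
    have hsq : √(n : ℝ) * √n = n := Real.mul_self_sqrt (by linarith)
    rw [le_div_iff₀ hln]
    calc (q : ℝ) ^ (m + 1) * Real.log n ≤ (√n * q) * (2 * √n) := by
          rw [pow_succ]; gcongr
      _ = 2 * q * (√n * √n) := by ring
      _ = 2 * q * n := by rw [hsq]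
  · rw [div_le_div_iff₀ (by positivity) hln]
    calc (n : ℝ) * Real.log n ≤ n * (2 * (m + 1 : ℕ) * Real.log q) := by gcongr
      _ = _ := by simp only [Nat.succ_eq_add_one]; ring
end

section
/- Let q ≥ 2 and m ≥ 2 be integers, and let S be a nonempty finite set of positive integers each strictly less than m. Then the least common multiple of the numbers q^i − 1 for i ∈ S is not equal to q^m − 1. -/
/-!
Put `c = Φ_m(q)`, the value of the `m`-th cyclotomic polynomial at `q`; it exceeds `1` since `m, q ≥ 2`.
If `q ^ m - 1` were the least common multiple, every `q ^ i - 1` with `i ∈ S` would divide it,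
which forces `i ∣ m`. As `i` is then a proper divisor of `m`, the polynomial `(X ^ i - 1) * Φ_m`
divides `X ^ m - 1`, so `q ^ i - 1` already divides `(q ^ m - 1) / c`. Hence `(q ^ m - 1) / c` is a
smaller positive common multiple, a contradiction.
-/

/-- If `q ^ i - 1 ∣ q ^ m - 1`, then `i ∣ m`, because
`gcd (q ^ i - 1, q ^ m - 1) = q ^ gcd (i, m) - 1`. -/
lemma dvd_of_pow_sub_one_dvd {q i m : ℕ} (hq : 2 ≤ q) (h : q ^ i - 1 ∣ q ^ m - 1) : i ∣ m := by
  have h1 := Nat.pow_sub_one_gcd_pow_sub_one q i m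
  rw [Nat.gcd_eq_left h] at h1
  have h2 : q ^ i = q ^ Nat.gcd i m := by
    have := Nat.pow_pos (n := i) (show 0 < q by omega)
    have := Nat.pow_pos (n := Nat.gcd i m) (show 0 < q by omega)
    omega
  exact Nat.gcd_eq_left_iff_dvd.mp (Nat.pow_right_injective hq h2).symm

/-- There is a single factor `c > 1` of `q ^ m - 1`, namely `Φ_m(q)`, that can be split off from
`q ^ m - 1` without affecting divisibility by `q ^ i - 1`, for every proper divisor `i` of `m`. -/
lemma exists_factor {q m : ℕ} (hq : 2 ≤ q) (hm : 2 ≤ m) :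
    ∃ c : ℕ, 1 < c ∧ c ∣ q ^ m - 1 ∧
      ∀ i, i ∣ m → i < m → (q ^ i - 1) * c ∣ q ^ m - 1 := by
  have hcast : ∀ n : ℕ, ((q ^ n - 1 : ℕ) : ℤ) = (q : ℤ) ^ n - 1 := fun n => by
    rw [Nat.cast_sub (Nat.one_le_pow _ _ (by omega))]
    simp
  have hpos : 1 < (Polynomial.cyclotomic m ℤ).eval (q : ℤ) := by
    have h1 := Polynomial.sub_one_lt_natAbs_cyclotomic_eval (n := m) (q := q) (by omega) (by omega)
    have h2 := Polynomial.cyclotomic_pos' m (show (1 : ℤ) < q by exact_mod_cast hq)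
    omega
  obtain ⟨c, hc⟩ := Int.eq_ofNat_of_zero_le (by omega : 0 ≤ (Polynomial.cyclotomic m ℤ).eval (q : ℤ))
  have hdvd : ∀ i, i ∣ m → i < m → (q ^ i - 1) * c ∣ q ^ m - 1 := fun i hi hlt => by
    have h := Polynomial.eval_dvd (x := (q : ℤ))
      (Polynomial.X_pow_sub_one_mul_cyclotomic_dvd_X_pow_sub_one_of_dvd ℤ
        (Nat.mem_properDivisors.mpr ⟨hi, hlt⟩))
    simp only [Polynomial.eval_mul, Polynomial.eval_sub, Polynomial.eval_pow, Polynomial.eval_X,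
      Polynomial.eval_one, hc, ← hcast] at h
    exact_mod_cast h
  exact ⟨c, by omega, (Dvd.intro_left _ rfl).trans (hdvd 1 (one_dvd m) (by omega)), hdvd⟩

/-- For integers `q, m ≥ 2` and a nonempty finite set `S` of positive integers all
less than `m`, `lcm_{i ∈ S} (q^i - 1) ≠ q^m - 1`. -/
theorem stmt14 (q m : ℕ) (hq : 2 ≤ q) (hm : 2 ≤ m)
    (S : Finset ℕ) (hS : S.Nonempty) (hlt : ∀ i ∈ S, 0 < i ∧ i < m) :
    S.lcm (fun i => q ^ i - 1) ≠ q ^ m - 1 := by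
  intro h
  obtain ⟨c, hc, ⟨k, hk⟩, hdvd⟩ := exists_factor hq hm
  have hpos : 0 < q ^ m - 1 := Nat.sub_pos_of_lt (Nat.one_lt_pow (by omega) (by omega))
  have hkpos : 0 < k := Nat.pos_of_ne_zero fun h0 => by simp [h0] at hk; omega
  have hle : q ^ m - 1 ∣ k := by
    rw [← h]
    refine Finset.lcm_dvd fun i hi => ?_
    have hi' : q ^ i - 1 ∣ q ^ m - 1 := h ▸ Finset.dvd_lcm (f := fun i => q ^ i - 1) hi
    have h1 := hdvd i (dvd_of_pow_sub_one_dvd hq hi') (hlt i hi).2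
    rw [hk, mul_comm] at h1
    exact Nat.dvd_of_mul_dvd_mul_left (by omega) h1
  have := Nat.le_of_dvd hkpos hle
  nlinarith
end

section
/- Let q = 2^n with n ≥ 1 and fix ζ ∈ F_q with absolute trace Tr_{F_q/F_2}(ζ) = 1. For every a, b, c ∈ F_q with a ≠ 0, there exist α, β, B ∈ F_q with α ≠ 0 such that, writing σ(x) = α x + β and f(x) = a x² + b x + c, the conjugate σ ∘ f ∘ σ⁻¹ equals x² + B x or equals x² + B x + (B² + 1)·ζ as a map of F_q. -/
/-!
Take `α = a` and `B = b`; comparing coefficients in characteristic two, `σ` conjugates `f` to one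
of the two normal forms iff `β² + (b + 1) β` is `a c` or `a c + (b + 1)² ζ`. If `b = 1`, take
`β = √(a c)`. Otherwise substitute `β = (b + 1) y` and put `t = a c / (b + 1)²`: it remains to
solve `y² + y = t` or `y² + y = t + ζ`. The explicit Hilbert 90 element
`y = ∑_{i < n} (∑_{j < i} t^{2^j}) ζ^{2^i}` satisfies `y² + y = t + Tr(t) ζ` because `Tr ζ = 1`,
and `Tr(t) ∈ {0, 1}` because `Tr(t)² = Tr(t)`.
-/

theorem sq_partialTrace {F : Type*} [Field F] [CharP F 2] (x : F) (m : ℕ) :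
    (∑ i ∈ Finset.range m, x ^ 2 ^ i) ^ 2 = ∑ i ∈ Finset.range m, x ^ 2 ^ (i + 1) := by
  rw [sum_pow_char 2]
  exact Finset.sum_congr rfl fun i _ => by rw [← pow_mul, ← pow_succ]

/-- The Hilbert 90 sum, truncated at `m`: applying `y ↦ y² + y` telescopes. -/
theorem hilbertSum_sq_add {F : Type*} [Field F] [CharP F 2] (t z : F) (m : ℕ) :
    (∑ i ∈ Finset.range m, (∑ j ∈ Finset.range i, t ^ 2 ^ j) * z ^ 2 ^ i) ^ 2 +
        ∑ i ∈ Finset.range m, (∑ j ∈ Finset.range i, t ^ 2 ^ j) * z ^ 2 ^ i =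
      t * (∑ i ∈ Finset.range m, z ^ 2 ^ i) ^ 2 +
        (∑ j ∈ Finset.range m, t ^ 2 ^ j) * z ^ 2 ^ m := by
  have h2 : (2 : F) = 0 := CharTwo.two_eq_zero
  induction m with
  | zero => simp
  | succ m ih =>
    have hS : (∑ j ∈ Finset.range (m + 1), t ^ 2 ^ j) =
        (∑ j ∈ Finset.range m, t ^ 2 ^ j) ^ 2 + t := by
      rw [sq_partialTrace, Finset.sum_range_succ']
      simp
    have hz : z ^ 2 ^ (m + 1) = (z ^ 2 ^ m) ^ 2 := by rw [← pow_mul, ← pow_succ]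
    rw [hS, hz, Finset.sum_range_succ, Finset.sum_range_succ (fun i => z ^ 2 ^ i),
      CharTwo.add_sq, CharTwo.add_sq]
    linear_combination ih +
      ((∑ j ∈ Finset.range m, t ^ 2 ^ j) * z ^ 2 ^ m - t * (z ^ 2 ^ m) ^ 2) * h2

/-- Up to adding `ζ`, every element lies in the image of `y ↦ y² + y`. -/
theorem exists_sq_add_self {F : Type*} [Field F] [Fintype F] [CharP F 2] (n : ℕ)
    (hcard : Fintype.card F = 2 ^ n) (ζ : F)
    (hζ : ∑ i ∈ Finset.range n, ζ ^ 2 ^ i = 1) (t : F) :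
    ∃ y : F, y ^ 2 + y = t ∨ y ^ 2 + y = t + ζ := by
  have hF (x : F) : x ^ 2 ^ n = x := by rw [← hcard, FiniteField.pow_card]
  have hT : (∑ i ∈ Finset.range n, t ^ 2 ^ i) ^ 2 = ∑ i ∈ Finset.range n, t ^ 2 ^ i := by
    have h := Finset.sum_range_succ (fun i => t ^ 2 ^ i) n
    rw [Finset.sum_range_succ', hF] at h
    rw [sq_partialTrace]
    simpa using h
  have h := hilbertSum_sq_add t ζ n
  rw [hζ, hF] at h
  have h01 : ∑ i ∈ Finset.range n, t ^ 2 ^ i = 0 ∨ ∑ i ∈ Finset.range n, t ^ 2 ^ i = 1 := by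
    rw [← IsIdempotentElem.iff_eq_zero_or_one, IsIdempotentElem, ← sq, hT]
  rcases h01 with h0 | h1
  · exact ⟨_, Or.inl (h.trans (by rw [h0]; ring))⟩
  · exact ⟨_, Or.inr (h.trans (by rw [h1]; ring))⟩

/-- Normal forms for quadratic maps over `F_{2^n}`: every `f(x) = a x² + b x + c` with
`a ≠ 0` is conjugate by an invertible affine map `σ(x) = α x + β` to `x² + B x` or to
`x² + B x + (B² + 1) ζ`, where `ζ` is a fixed element of absolute trace `1` (the
absolute trace of `ζ` is `∑_{i < n} ζ^{2^i}`).  The conjugacy `σ ∘ f ∘ σ⁻¹ = g` is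
expressed as `σ ∘ f = g ∘ σ`. -/
theorem stmt15 (F : Type*) [Field F] [Fintype F] (n : ℕ) (hn : 0 < n)
    (hcard : Fintype.card F = 2 ^ n)
    (ζ : F) (hζ : ∑ i ∈ Finset.range n, ζ ^ 2 ^ i = 1)
    (a b c : F) (ha : a ≠ 0) :
    ∃ α β B : F, α ≠ 0 ∧
      ((∀ x, α * (a * x ^ 2 + b * x + c) + β = (α * x + β) ^ 2 + B * (α * x + β)) ∨
       (∀ x, α * (a * x ^ 2 + b * x + c) + β =
          (α * x + β) ^ 2 + B * (α * x + β) + (B ^ 2 + 1) * ζ)) := by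
  have hchar : CharP F 2 := by
    obtain ⟨p, hp⟩ := CharP.exists F
    obtain ⟨m, hpp, hm⟩ := FiniteField.card F p
    have hdvd : p ∣ 2 ^ n := hcard ▸ hm ▸ dvd_pow_self p m.ne_zero
    have : p = 2 := (Nat.prime_dvd_prime_iff_eq hpp Nat.prime_two).mp (hpp.dvd_of_dvd_pow hdvd)
    exact this ▸ hp
  have h2 : (2 : F) = 0 := CharTwo.two_eq_zero
  obtain ⟨β, hβ⟩ : ∃ β : F, β ^ 2 + (b + 1) * β = a * c ∨
      β ^ 2 + (b + 1) * β = a * c + (b + 1) ^ 2 * ζ := by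
    by_cases hb : b + 1 = 0
    · obtain ⟨s, hs⟩ := FiniteField.isSquare_of_char_two (ringChar.eq F 2) (a * c)
      exact ⟨s, Or.inl (by rw [hb, hs]; ring)⟩
    · obtain ⟨y, hy⟩ := exists_sq_add_self n hcard ζ hζ (a * c / (b + 1) ^ 2)
      have hd : (b + 1) ^ 2 * (a * c / (b + 1) ^ 2) = a * c := mul_div_cancel₀ _ (pow_ne_zero 2 hb)
      refine ⟨(b + 1) * y, hy.imp (fun h => ?_) (fun h => ?_)⟩ <;>
        linear_combination (b + 1) ^ 2 * h + hd
  refine ⟨a, β, b, ha, hβ.imp (fun h x => ?_) (fun h x => ?_)⟩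
  · linear_combination -h + (β - a * x * β) * h2
  · linear_combination -h + (β - a * x * β - (b ^ 2 + b + 1) * ζ) * h2
end

section
/- Let q = 2^n with n ≥ 1 and fix ζ ∈ F_q with absolute trace Tr_{F_q/F_2}(ζ) = 1. Suppose f and g are two maps of F_q, each of the form x ↦ x² + b x or x ↦ x² + b x + (b² + 1)·ζ for some b ∈ F_q, and suppose there exist α, β ∈ F_q with α ≠ 0 such that, writing σ(x) = α x + β, σ ∘ f ∘ σ⁻¹ = g. Then f = g. -/
/-!
Write the maps as `x ↦ x² + b x + c` and `x ↦ x² + b' x + c'`. The conjugation relation, with its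
value at `0` subtracted, gives `(1 - α) x = b' - b` for every `x ≠ 0`; comparing `x = 1` with
`x = α` yields `(1 - α)² = 0`, so `α = 1` and `b = b'` (uniformly in `q`, including `q = 2`).
The value at `0` then reads `c - c' = β² + (b + 1) β` in characteristic two. If `c ≠ c'`, then
`b ≠ 1` and `t = β / (b + 1)` satisfies `t² + t = ζ`, which is impossible because elements
of the form `t² + t` have trace `0`.
-/

/-- The easy direction of additive Hilbert 90: elements of the form `t² + t` have absolute
trace zero. -/
theorem trace_sq_add_self {F : Type*} [Field F] [Fintype F] [CharP F 2] (n : ℕ)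
    (hcard : Fintype.card F = 2 ^ n) (t : F) :
    ∑ i ∈ Finset.range n, (t ^ 2 + t) ^ 2 ^ i = 0 := by
  have h : ∀ m : ℕ, ∑ i ∈ Finset.range m, (t ^ 2 + t) ^ 2 ^ i = t ^ 2 ^ m - t := by
    intro m
    induction m with
    | zero => simp
    | succ k ih =>
      rw [Finset.sum_range_succ, ih, add_pow_char_pow, ← pow_mul, ← pow_succ']
      have := CharTwo.add_self_eq_zero (t ^ 2 ^ k)
      linear_combination this
  rw [h, ← hcard, FiniteField.pow_card, sub_self]

/-- Affinely conjugate monic quadratic maps in characteristic two have the same linear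
coefficient, and the conjugating map is a translation. -/
theorem coeffs_of_conj {F : Type*} [Field F] [CharP F 2] {α β b c b' c' : F} (hα : α ≠ 0)
    (h : ∀ x, α * (x ^ 2 + b * x + c) + β =
      (α * x + β) ^ 2 + b' * (α * x + β) + c') :
    b = b' ∧ c + c' = β ^ 2 + (b + 1) * β := by
  have h2 : (2 : F) = 0 := CharTwo.two_eq_zero
  have h0 := h 0
  have key : ∀ x, x ≠ 0 → (1 - α) * x = b' - b := by
    intro x hx
    apply mul_left_cancel₀ (mul_ne_zero hα hx)
    linear_combination h x - h0 + α * x * β * h2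
  have k1 := key 1 one_ne_zero
  have hα1 : α = 1 := by
    have : (1 - α) ^ 2 = 0 := by linear_combination k1 - key α hα
    exact (sub_eq_zero.1 (pow_eq_zero_iff two_ne_zero |>.1 this)).symm
  subst hα1
  have hb : b = b' := by linear_combination k1
  subst hb
  exact ⟨rfl, by linear_combination h0 + (c' - β) * h2⟩

/-- Rigidity of the normal forms: if two maps of `F_{2^n}`, each of the form
`x ↦ x² + b x` or `x ↦ x² + b x + (b² + 1) ζ` (with `ζ` a fixed element of absolute
trace `1`), are conjugate by an invertible affine map `σ(x) = α x + β` (i.e.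
`σ ∘ f = g ∘ σ`), then they are equal. -/
theorem stmt16 (F : Type*) [Field F] [Fintype F] (n : ℕ) (hn : 0 < n)
    (hcard : Fintype.card F = 2 ^ n)
    (ζ : F) (hζ : ∑ i ∈ Finset.range n, ζ ^ 2 ^ i = 1)
    (f g : F → F)
    (hf : ∃ b : F, f = (fun x => x ^ 2 + b * x) ∨
      f = fun x => x ^ 2 + b * x + (b ^ 2 + 1) * ζ)
    (hg : ∃ b : F, g = (fun x => x ^ 2 + b * x) ∨
      g = fun x => x ^ 2 + b * x + (b ^ 2 + 1) * ζ)
    (α β : F) (hα : α ≠ 0) (hconj : ∀ x, α * f x + β = g (α * x + β)) :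
    f = g := by
  have : CharP F 2 := by
    have : Fact (Nat.Prime 2) := ⟨Nat.prime_two⟩
    exact charP_of_card_eq_prime_pow hcard
  have h2 : (2 : F) = 0 := CharTwo.two_eq_zero
  -- The constant terms `0` and `(b² + 1) ζ` of the two normal forms cannot differ.
  have no : ∀ b : F, (b ^ 2 + 1) * ζ = β ^ 2 + (b + 1) * β → (b ^ 2 + 1) * ζ = 0 := by
    intro b h
    by_cases hb : b + 1 = 0
    · linear_combination (b + 1) * ζ * hb - b * ζ * h2
    · exfalso
      have ht : (β / (b + 1)) ^ 2 + β / (b + 1) = ζ := by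
        field_simp
        linear_combination -h - b * ζ * h2
      have := trace_sq_add_self n hcard (β / (b + 1))
      rw [ht, hζ] at this
      exact one_ne_zero this
  obtain ⟨b, hf⟩ := hf
  obtain ⟨b', hg⟩ := hg
  rcases hf with rfl | rfl <;> rcases hg with rfl | rfl
  · obtain ⟨rfl, -⟩ := coeffs_of_conj (c := 0) (c' := 0) hα (by simpa using hconj)
    rfl
  · obtain ⟨rfl, h⟩ := coeffs_of_conj (c := 0) hα (by simpa using hconj)
    simp [no b (by simpa using h)]
  · obtain ⟨rfl, h⟩ := coeffs_of_conj (c' := 0) hα (by simpa using hconj)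
    simp [no b (by simpa using h)]
  · obtain ⟨rfl, -⟩ := coeffs_of_conj hα hconj
    rfl
end

section
/- Let q = 2^n with n ≥ 1. The number of dynamical equivalence classes of maps of F_q of the form x ↦ a x² + b x + c with a, b, c ∈ F_q and a ≠ 0 is at most 2^{n+1} − 1. -/
/-- The set of quadratic polynomial maps `x ↦ a x² + b x + c` (`a ≠ 0`) of `F`. -/
def QuadMaps (F : Type*) [Field F] : Set (F → F) :=
  {f | ∃ a b c : F, a ≠ 0 ∧ f = fun x => a * x ^ 2 + b * x + c}

/-- The additive map `d ↦ d² + (b + 1) d`, by which translations act on constant coefficients. -/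
def translationHom {F : Type*} [Field F] [CharP F 2] (b : F) : F →+ F where
  toFun d := d ^ 2 + (b + 1) * d
  map_zero' := by ring
  map_add' x y := by
    rw [CharTwo.add_sq]
    ring

/-- The kernel `{0, b + 1}` has two elements when `b ≠ 1`. -/
lemma card_translationHom_ker {F : Type*} [Field F] [CharP F 2] (b : F) (hb : b ≠ 1) :
    Nat.card (translationHom b).ker = 2 := by
  have hne : (0 : F) ≠ b + 1 := fun h => hb (CharTwo.add_eq_zero.mp h.symm)
  have hset : ((translationHom b).ker : Set F) = {0, b + 1} := by
    ext d
    have hfac : d ^ 2 + (b + 1) * d = d * (d + (b + 1)) := by ring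
    change d ^ 2 + (b + 1) * d = 0 ↔ d = 0 ∨ d = b + 1
    rw [hfac, mul_eq_zero, CharTwo.add_eq_zero]
  change Nat.card ((translationHom b).ker : Set F) = 2
  rw [hset, Nat.card_coe_set_eq, Set.ncard_pair hne]

/-- The range of `translationHom b` has index two when `b ≠ 1`, so it has at most one further
coset. -/
lemma exists_coset_rep {F : Type*} [Field F] [Finite F] [CharP F 2] (b : F) (hb : b ≠ 1) :
    ∃ e : F, ∀ c : F, (∃ d, c = translationHom b d) ∨ ∃ d, c = e + translationHom b d := by
  have hindex : (translationHom b).range.index = 2 := by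
    have h1 := (translationHom b).range.card_mul_index
    have h2 := (translationHom b).ker.card_mul_index
    rw [AddSubgroup.index_ker, card_translationHom_ker b hb, ← h1, mul_comm] at h2
    exact (Nat.eq_of_mul_eq_mul_left Nat.card_pos h2).symm
  obtain ⟨e, he⟩ := AddSubgroup.index_eq_two_iff.mp hindex
  refine ⟨e, fun c => ?_⟩
  rcases he c with ⟨⟨d, hd⟩, -⟩ | ⟨⟨d, hd⟩, -⟩
  · right
    refine ⟨d, ?_⟩
    rw [hd]
    linear_combination -CharTwo.add_self_eq_zero e
  · exact Or.inl ⟨d, hd.symm⟩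

/-- The monic quadratic map `x ↦ x² + b x + c`. -/
def monicQuad {F : Type*} [Field F] (b c : F) : QuadMaps F :=
  ⟨fun x => x ^ 2 + b * x + c, 1, b, c, one_ne_zero, by simp⟩

lemma dynEquiv_monicQuad {F : Type*} [Field F] (a b c : F) (ha : a ≠ 0) :
    DynEquiv (fun x : F => a * x ^ 2 + b * x + c) (monicQuad b (a * c)).1 := by
  refine ⟨Equiv.mulLeft₀ a ha, fun x => ?_⟩
  simp only [monicQuad, Equiv.mulLeft₀_apply]
  ring

lemma dynEquiv_translate {F : Type*} [Field F] [CharP F 2] (b c d : F) :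
    DynEquiv (monicQuad b (c + translationHom b d)).1 (monicQuad b c).1 := by
  refine ⟨Equiv.addRight d, fun x => ?_⟩
  simp only [monicQuad, translationHom, Equiv.coe_addRight, AddMonoidHom.coe_mk, ZeroHom.coe_mk]
  rw [CharTwo.add_sq]
  linear_combination CharTwo.add_self_eq_zero d

/-- The number of dynamical equivalence classes of quadratic polynomial maps of
`F_{2^n}` is at most `2^{n+1} - 1`. -/
theorem stmt17 (F : Type*) [Field F] [Fintype F] (n : ℕ) (hn : 0 < n)
    (hcard : Fintype.card F = 2 ^ n) :
    Nat.card (Quot (fun f g : QuadMaps F => DynEquiv f.1 g.1)) ≤ 2 ^ (n + 1) - 1 := by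
  classical
  have : Fact (Nat.Prime 2) := ⟨Nat.prime_two⟩
  have : CharP F 2 := charP_of_card_eq_prime_pow hcard
  choose! e he using fun (b : F) (hb : b ≠ 1) => exists_coset_rep b hb
  let cls : F → F → Quot (fun f g : QuadMaps F => DynEquiv f.1 g.1) :=
    fun b c => Quot.mk _ (monicQuad b c)
  have hshift : ∀ b c d : F, cls b (c + translationHom b d) = cls b c :=
    fun b c d => Quot.sound (dynEquiv_translate b c d)
  have hshift0 : ∀ b d : F, cls b (translationHom b d) = cls b 0 := by
    intro b d
    simpa using hshift b 0 d
  let S := Finset.univ.image (fun b => cls b 0) ∪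
    (Finset.univ.erase (1 : F)).image (fun b => cls b (e b))
  have hcls : ∀ b c : F, cls b c ∈ S := by
    intro b c
    have hmem0 : cls b 0 ∈ S :=
      Finset.mem_union_left _ (Finset.mem_image_of_mem _ (Finset.mem_univ b))
    by_cases hb : b = 1
    · subst hb
      -- Every element of a finite field of characteristic two is a square.
      obtain ⟨d, rfl⟩ := FiniteField.isSquare_of_char_two (ringChar.eq F 2) c
      have hd : translationHom (1 : F) d = d * d := by
        change d ^ 2 + (1 + 1) * d = d * d
        rw [CharTwo.add_self_eq_zero]
        ring
      rwa [← hd, hshift0]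
    · rcases he b hb c with ⟨d, rfl⟩ | ⟨d, rfl⟩
      · rwa [hshift0]
      · rw [hshift]
        exact Finset.mem_union_right _ (Finset.mem_image_of_mem _ (by simp [hb]))
  have hall : ∀ z, z ∈ S := by
    rintro ⟨f, a, b, c, ha, rfl⟩
    have h : Quot.mk _ ⟨_, a, b, c, ha, rfl⟩ = cls b (a * c) :=
      Quot.sound (dynEquiv_monicQuad a b c ha)
    rw [h]
    exact hcls b (a * c)
  have hS : S.card ≤ 2 ^ n + (2 ^ n - 1) := by
    refine (Finset.card_union_le _ _).trans (add_le_add ?_ ?_)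
    · exact Finset.card_image_le.trans (by simp [hcard])
    · exact Finset.card_image_le.trans (by simp [hcard])
  have hq : Nat.card (Quot (fun f g : QuadMaps F => DynEquiv f.1 g.1)) = S.card := by
    rw [Nat.card_congr (Equiv.subtypeUnivEquiv hall).symm]
    exact Nat.card_eq_finsetCard S
  have hpos : 0 < 2 ^ n := by positivity
  rw [hq, pow_succ]
  omega
end
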